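/- Let (X, γ) be a probability space and let E₁, …, E_N be pairwise independent measurable subsets of X (γ(Eᵢ ∩ Eⱼ) = γ(Eᵢ)γ(Eⱼ) for i ≠ j). Then for every measurable set E ⊆ X, | ∑ᵢ₌₁^N ( γ(E ∩ Eᵢ) − γ(E) γ(Eᵢ) ) | ≤ √( ∑ᵢ₌₁^N γ(Eᵢ)(1 − γ(Eᵢ)) ). -/

import Mathlib

open MeasureTheory

/-!
Write `cov` for the covariance under `γ`. For indicators, `cov(1_A, 1_B) = γ(A ∩ B) - γ(A)γ(B)`,
so with `S = ∑ 1_{E i}` the left-hand side is `|c|` for `c = cov(1_F, S)`, and by pairwise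
independence `Var S = ∑ γ(E i)(1 - γ(E i))`. Instead of quoting Cauchy–Schwarz, one expands
`0 ≤ Var (c • 1_F - S) = c² Var 1_F - 2 c² + Var S` and uses `Var 1_F ≤ 1` to get `c² ≤ Var S`.
-/

lemma memLp_two_indicator_one {X : Type*} [MeasurableSpace X] (γ : Measure X)
    [IsProbabilityMeasure γ] {A : Set X} (hA : MeasurableSet A) :
    MemLp (A.indicator (1 : X → ℝ)) 2 γ :=
  (memLp_const (1 : ℝ)).indicator hA

lemma covariance_indicator_one {X : Type*} [MeasurableSpace X] (γ : Measure X)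
    [IsProbabilityMeasure γ] {A B : Set X} (hA : MeasurableSet A) (hB : MeasurableSet B) :
    ProbabilityTheory.covariance (A.indicator (1 : X → ℝ)) (B.indicator 1) γ =
      (γ (A ∩ B)).toReal - (γ A).toReal * (γ B).toReal := by
  rw [ProbabilityTheory.covariance_eq_sub (memLp_two_indicator_one γ hA)
    (memLp_two_indicator_one γ hB), ← Set.inter_indicator_one, integral_indicator_one hA,
    integral_indicator_one hB, integral_indicator_one (hA.inter hB)]
  rfl

/-- For pairwise independent sets `E 1, …, E N` in a probability space `(X, γ)` and any
measurable set `F`, `|∑ (γ (F ∩ E i) − γ F · γ (E i))| ≤ √(∑ γ (E i) (1 − γ (E i)))`. -/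
theorem stmt3 {X : Type*} [MeasurableSpace X] (γ : Measure X) [IsProbabilityMeasure γ]
    (N : ℕ) (E : Fin N → Set X) (hE : ∀ i, MeasurableSet (E i))
    (hind : ∀ i j, i ≠ j → γ (E i ∩ E j) = γ (E i) * γ (E j))
    (F : Set X) (hF : MeasurableSet F) :
    |∑ i : Fin N, ((γ (F ∩ E i)).toReal - (γ F).toReal * (γ (E i)).toReal)| ≤
      Real.sqrt (∑ i : Fin N, (γ (E i)).toReal * (1 - (γ (E i)).toReal)) := by
  have hEL := fun i => memLp_two_indicator_one γ (hE i)
  have hFL := memLp_two_indicator_one γ hF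
  have hSL : MemLp (∑ i, (E i).indicator (1 : X → ℝ)) 2 γ :=
    memLp_finsetSum' _ fun i _ => hEL i
  have hcov : ProbabilityTheory.covariance (F.indicator (1 : X → ℝ))
      (∑ i, (E i).indicator (1 : X → ℝ)) γ =
      ∑ i : Fin N, ((γ (F ∩ E i)).toReal - (γ F).toReal * (γ (E i)).toReal) := by
    rw [ProbabilityTheory.covariance_sum_right hEL hFL]
    exact Finset.sum_congr rfl fun i _ => covariance_indicator_one γ hF (hE i)
  have hvar : ProbabilityTheory.variance (∑ i, (E i).indicator (1 : X → ℝ)) γ =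
      ∑ i : Fin N, (γ (E i)).toReal * (1 - (γ (E i)).toReal) := by
    rw [ProbabilityTheory.variance_sum hEL]
    refine Finset.sum_congr rfl fun i _ => ?_
    rw [Finset.sum_eq_single i]
    · rw [covariance_indicator_one γ (hE i) (hE i), Set.inter_self]
      ring
    · intro j _ hj
      rw [covariance_indicator_one γ (hE i) (hE j), hind i j hj.symm, ENNReal.toReal_mul, sub_self]
    · simp
  have hvarF : ProbabilityTheory.variance (F.indicator (1 : X → ℝ)) γ ≤ 1 := by
    rw [← ProbabilityTheory.covariance_self hFL.aestronglyMeasurable.aemeasurable,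
      covariance_indicator_one γ hF hF, Set.inter_self]
    have h1 : (γ F).toReal ≤ 1 := measureReal_le_one
    nlinarith [mul_self_nonneg (γ F).toReal]
  rw [← hcov, ← hvar]
  set c := ProbabilityTheory.covariance (F.indicator (1 : X → ℝ))
      (∑ i, (E i).indicator (1 : X → ℝ)) γ with hc
  have h0 := ProbabilityTheory.variance_nonneg
    (c • F.indicator (1 : X → ℝ) - ∑ i, (E i).indicator (1 : X → ℝ)) γ
  rw [ProbabilityTheory.variance_sub (hFL.const_smul c) hSL, ProbabilityTheory.variance_smul,
    ProbabilityTheory.covariance_smul_left, ← hc] at h0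
  apply Real.abs_le_sqrt
  nlinarith [mul_le_mul_of_nonneg_left hvarF (sq_nonneg c)]
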